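/- Let n ≥ 5 and let F be a stacked (n-1)-sphere with exactly 3n+1 vertices. Let F_1 ≠ F_2 be two facets of F and let φ : F_1 → F_2 be a bijection such that for every v ∈ F_1 the graph distance between v and φ(v) in the 1-skeleton of F is at least 3. Let q be the map on vertices defined by q(w) = w for w not in F_2 and q(φ(v)) = v for v ∈ F_1, and let M = { q(G) : G a facet of F, G ≠ F_1, G ≠ F_2 } be the resulting identified stacked sphere on the 2n+1 vertices V(F) \ F_2. Then M is combinatorially isomorphic to Kühnel's complex K_n: there is a bijection ψ from V(F) \ F_2 to ℤ/(2n+1) such that a set S is a member of M if and only if ψ(S) is a facet of K_n. (This is the combinatorial content of the theorem that every minimal identified stacked sphere is isomorphic to M^n.) -/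

import Mathlib

/-- A family of `n`-element subsets of `V` is a stacked `(n-1)`-sphere if it is
the set of facets of the boundary of an `n`-simplex, or is obtained from a
stacked `(n-1)`-sphere by subdividing a facet `T` at a new vertex `v`. -/
inductive IsStackedSphere {V : Type*} [DecidableEq V] (n : ℕ) : Finset (Finset V) → Prop
  | simplex (W : Finset V) (hW : W.card = n + 1) :
      IsStackedSphere n (W.powersetCard n)
  | subdivide (F : Finset (Finset V)) (T : Finset V) (v : V)
      (hF : IsStackedSphere n F) (hT : T ∈ F)
      (hv : ∀ S ∈ F, v ∉ S) :
      IsStackedSphere n (F.erase T ∪ T.image (fun t => insert v (T.erase t)))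

/-- The 1-skeleton of a family `F` of facets: two distinct vertices are
adjacent iff they lie in a common member of `F`. -/
def famSkeleton {V : Type*} (F : Finset (Finset V)) : SimpleGraph V :=
  SimpleGraph.fromRel (fun a b => ∃ S ∈ F, a ∈ S ∧ b ∈ S)

/-- `S` is a facet of Kühnel's complex `K_n` on vertex set `ℤ/(2n+1)`: `S` is an
`n`-element subset of some cyclic interval `{a, a+1, …, a+n}` which is not a
cyclic interval `{b, b+1, …, b+n-1}`. -/
def KuhnelFacet (n : ℕ) (S : Finset (ZMod (2 * n + 1))) : Prop :=
  S.card = n ∧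
    (∃ a : ZMod (2 * n + 1), S ⊆ (Finset.range (n + 1)).image (fun k : ℕ => a + (k : ZMod (2 * n + 1)))) ∧
    (∀ b : ZMod (2 * n + 1), S ≠ (Finset.range n).image (fun k : ℕ => b + (k : ZMod (2 * n + 1))))

theorem aux_p1 (P A T : Prop) (h : T → P) : (P ∨ A ∨ T) ↔ (A ∨ P) := by tauto

theorem aux_p2 (P a b A B : Prop) (h : A → B → P) :
    (P ∨ ((a ∨ A) ∧ (b ∨ B))) ↔ ((P ∨ (a ∧ (b ∨ B))) ∨ (A ∧ b)) := by tauto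

def Rl {V : Type*} (F : Finset (Finset V)) (a b : V) : Prop := ∃ S ∈ F, a ∈ S ∧ b ∈ S

def Clq {V : Type*} (F : Finset (Finset V)) (Q : Finset V) : Prop := ∀ a ∈ Q, ∀ b ∈ Q, Rl F a b

structure GoodFam {V : Type*} [DecidableEq V] (n : ℕ) (F : Finset (Finset V)) : Prop where
  card : ∀ S ∈ F, S.card = n
  noK : ∀ Q, Clq F Q → Q.card ≤ n + 1
  noC4 : ∀ a b c d, Rl F a b → Rl F b c → Rl F c d → Rl F d a → Rl F a c ∨ Rl F b d
  edges : (F.biUnion fun S => S ×ˢ S).card + n * (n + 1) = (2 * n + 1) * (F.biUnion id).card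
  char : ∀ S, S ∈ F ↔ S.card = n ∧ Clq F S ∧ ∃! u, u ∉ S ∧ Clq F (insert u S)

theorem Rl.symm {V : Type*} {F : Finset (Finset V)} {a b : V} (h : Rl F a b) : Rl F b a := by
  obtain ⟨S, h1, h2, h3⟩ := h
  exact ⟨S, h1, h3, h2⟩

theorem rl_simplex {V : Type*} [DecidableEq V] (n : ℕ) (hn : 3 ≤ n) (W : Finset V)
    (hW : W.card = n + 1) (a b : V) : Rl (W.powersetCard n) a b ↔ a ∈ W ∧ b ∈ W := by
  constructor
  · rintro ⟨S, hS, ha, hb⟩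
    rw [Finset.mem_powersetCard] at hS
    exact ⟨hS.1 ha, hS.1 hb⟩
  · rintro ⟨ha, hb⟩
    have : ({a, b} : Finset V).card < W.card := by
      have := Finset.card_le_two (a := a) (b := b)
      omega
    obtain ⟨t, ht, ht'⟩ := Finset.exists_mem_notMem_of_card_lt_card this
    simp only [Finset.mem_insert, Finset.mem_singleton, not_or] at ht'
    refine ⟨W.erase t, ?_, ?_, ?_⟩
    · rw [Finset.mem_powersetCard]
      refine ⟨Finset.erase_subset _ _, ?_⟩
      rw [Finset.card_erase_of_mem ht, hW]; rfl
    · exact Finset.mem_erase.2 ⟨fun h => ht'.1 h.symm, ha⟩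
    · exact Finset.mem_erase.2 ⟨fun h => ht'.2 h.symm, hb⟩

theorem good_simplex {V : Type*} [DecidableEq V] (n : ℕ) (hn : 3 ≤ n) (W : Finset V)
    (hW : W.card = n + 1) : GoodFam n (W.powersetCard n) := by
  have hR := rl_simplex n hn W hW
  have hC : ∀ Q, Clq (W.powersetCard n) Q ↔ Q ⊆ W := by
    intro Q
    constructor
    · intro h a ha
      exact ((hR a a).1 (h a ha a ha)).1
    · intro h a ha b hb
      exact (hR a b).2 ⟨h ha, h hb⟩
  have hV : (W.powersetCard n).biUnion id = W := by
    ext a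
    have := hR a a
    simp only [Rl, and_self] at this
    simp only [Finset.mem_biUnion, id]
    exact this
  have hE : ((W.powersetCard n).biUnion fun S => S ×ˢ S) = W ×ˢ W := by
    ext ⟨a, b⟩
    have := hR a b
    simp only [Rl] at this
    simp only [Finset.mem_biUnion, Finset.mem_product]
    exact this
  refine ⟨?_, ?_, ?_, ?_, ?_⟩
  · intro S hS
    exact (Finset.mem_powersetCard.1 hS).2
  · intro Q hQ
    rw [← hW]
    exact Finset.card_le_card ((hC Q).1 hQ)
  · intro a b c d h1 h2 h3 h4
    simp only [hR] at *
    tauto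
  · rw [hV, hE, Finset.card_product, hW]
    ring
  · intro S
    rw [Finset.mem_powersetCard, hC]
    constructor
    · rintro ⟨h1, h2⟩
      refine ⟨h2, h1, ?_⟩
      have h3 : (W \ S).card = 1 := by
        rw [Finset.card_sdiff_of_subset h1]; omega
      obtain ⟨u, hu⟩ := Finset.card_eq_one.1 h3
      have hu' : ∀ x, x ∈ W \ S ↔ x = u := by intro x; rw [hu]; simp
      refine ⟨u, ?_, ?_⟩
      · have := (hu' u).2 rfl
        rw [Finset.mem_sdiff] at this
        exact ⟨this.2, (hC _).2 (Finset.insert_subset this.1 h1)⟩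
      · rintro y ⟨hy1, hy2⟩
        rw [hC] at hy2
        exact (hu' y).1 (Finset.mem_sdiff.2 ⟨hy2 (Finset.mem_insert_self _ _), hy1⟩)
    · rintro ⟨h1, h2, -⟩
      exact ⟨h2, h1⟩

theorem rl_step {V : Type*} [DecidableEq V] (n : ℕ) (hn : 3 ≤ n) (F : Finset (Finset V))
    (T : Finset V) (v : V) (hT : T ∈ F) (hTc : T.card = n) (a b : V) :
    Rl (F.erase T ∪ T.image (fun t => insert v (T.erase t))) a b ↔
      Rl F a b ∨ (a ∈ insert v T ∧ b ∈ insert v T) := by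
  have key : a ∈ insert v T → b ∈ insert v T →
      Rl (F.erase T ∪ T.image (fun t => insert v (T.erase t))) a b := by
    intro ha hb
    have : ({a, b} : Finset V).card < T.card := by
      have := Finset.card_le_two (a := a) (b := b)
      omega
    obtain ⟨t, ht, ht'⟩ := Finset.exists_mem_notMem_of_card_lt_card this
    simp only [Finset.mem_insert, Finset.mem_singleton, not_or] at ht'
    refine ⟨insert v (T.erase t), ?_, ?_, ?_⟩
    · exact Finset.mem_union_right _ (Finset.mem_image_of_mem _ ht)
    · simp only [Finset.mem_insert, Finset.mem_erase] at *
      rcases ha with h | h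
      · exact Or.inl h
      · exact Or.inr ⟨fun h => ht'.1 h.symm, h⟩
    · simp only [Finset.mem_insert, Finset.mem_erase] at *
      rcases hb with h | h
      · exact Or.inl h
      · exact Or.inr ⟨fun h => ht'.2 h.symm, h⟩
  constructor
  · rintro ⟨S, hS, ha, hb⟩
    rw [Finset.mem_union] at hS
    rcases hS with hS | hS
    · exact Or.inl ⟨S, Finset.mem_of_mem_erase hS, ha, hb⟩
    · obtain ⟨t, ht, rfl⟩ := Finset.mem_image.1 hS
      have := Finset.insert_subset_insert v (Finset.erase_subset t T)
      exact Or.inr ⟨this ha, this hb⟩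
  · rintro (⟨S, hS, ha, hb⟩ | ⟨ha, hb⟩)
    · by_cases h : S = T
      · subst h
        exact key (Finset.mem_insert_of_mem ha) (Finset.mem_insert_of_mem hb)
      · exact ⟨S, Finset.mem_union_left _ (Finset.mem_erase.2 ⟨h, hS⟩), ha, hb⟩
    · exact key ha hb

theorem good_step {V : Type*} [DecidableEq V] (n : ℕ) (hn : 3 ≤ n) (F : Finset (Finset V))
    (T : Finset V) (v : V) (hT : T ∈ F) (hv : ∀ S ∈ F, v ∉ S) (hF : GoodFam n F) :
    GoodFam n (F.erase T ∪ T.image (fun t => insert v (T.erase t))) := by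
  have hTc := hF.card T hT
  have hR := rl_step n hn F T v hT hTc
  have hvT : v ∉ T := hv T hT
  have hmem : ∀ S, S ∈ F.erase T ∪ T.image (fun t => insert v (T.erase t)) ↔
      (S ≠ T ∧ S ∈ F) ∨ ∃ t ∈ T, insert v (T.erase t) = S := by
    intro S; simp only [Finset.mem_union, Finset.mem_erase, Finset.mem_image]
  set F' := F.erase T ∪ T.image (fun t => insert v (T.erase t)) with hF'
  have hvl : ∀ b, ¬ Rl F v b := by rintro b ⟨S, h1, h2, -⟩; exact hv S h1 h2
  have hvr : ∀ b, ¬ Rl F b v := by rintro b ⟨S, h1, -, h2⟩; exact hv S h1 h2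
  have hTT : ∀ a b, a ∈ T → b ∈ T → Rl F a b := fun a b ha hb => ⟨T, hT, ha, hb⟩
  have hR1 : ∀ a b, a ≠ v → b ≠ v → (Rl F' a b ↔ Rl F a b) := by
    intro a b ha hb
    rw [hR]
    have := hTT a b
    simp only [Finset.mem_insert]; tauto
  have hR2 : ∀ b, Rl F' v b ↔ b ∈ insert v T := by
    intro b
    rw [hR]
    have := hvl b
    simp only [Finset.mem_insert]; tauto
  have hCin : ∀ Q, v ∈ Q → (Clq F' Q ↔ Q ⊆ insert v T) := by
    intro Q hQ
    constructor
    · intro h a ha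
      exact (hR2 a).1 (h v hQ a ha)
    · intro h a ha b hb
      exact (hR a b).2 (Or.inr ⟨h ha, h hb⟩)
  have hCout : ∀ Q, v ∉ Q → (Clq F' Q ↔ Clq F Q) := by
    intro Q hQ
    have hne : ∀ a ∈ Q, a ≠ v := fun a ha h => hQ (h ▸ ha)
    constructor
    · intro h a ha b hb
      exact (hR1 a b (hne a ha) (hne b hb)).1 (h a ha b hb)
    · intro h a ha b hb
      exact (hR1 a b (hne a ha) (hne b hb)).2 (h a ha b hb)
  have hcard : ∀ t ∈ T, (insert v (T.erase t)).card = n := by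
    intro t ht
    rw [Finset.card_insert_of_notMem (fun h => hvT (Finset.mem_of_mem_erase h)),
      Finset.card_erase_of_mem ht]; omega
  have hV : F'.biUnion id = insert v (F.biUnion id) := by
    ext a
    have h1 := hR a a
    have h2 : a ∈ T → ∃ S ∈ F, a ∈ S := fun h => ⟨T, hT, h⟩
    simp only [Rl, and_self, Finset.mem_insert] at h1
    simp only [Finset.mem_biUnion, id, Finset.mem_insert]
    rw [h1]; exact aux_p1 _ _ _ h2
  have hE : (F'.biUnion fun S => S ×ˢ S) =
      ((F.biUnion fun S => S ×ˢ S) ∪ {v} ×ˢ (insert v T)) ∪ T ×ˢ {v} := by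
    ext ⟨a, b⟩
    have h1 := hR a b
    have h2 := hTT a b
    simp only [Rl, Finset.mem_insert] at h1 h2
    simp only [Finset.mem_biUnion, Finset.mem_insert, Finset.mem_union, Finset.mem_product,
      Finset.mem_singleton]
    rw [h1]; exact aux_p2 _ _ _ _ _ h2
  refine ⟨?_, ?_, ?_, ?_, ?_⟩
  · intro S hS
    rcases (hmem S).1 hS with h | ⟨t, ht, rfl⟩
    · exact hF.card S h.2
    · exact hcard t ht
  · intro Q hQ
    by_cases h : v ∈ Q
    · have := Finset.card_le_card ((hCin Q h).1 hQ)
      rwa [Finset.card_insert_of_notMem hvT, hTc] at this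
    · exact hF.noK Q ((hCout Q h).1 hQ)
  · intro a b c d h1 h2 h3 h4
    by_cases ha : a = v
    · subst ha
      right
      exact (hR b d).2 (Or.inr ⟨(hR2 b).1 h1, (hR2 d).1 h4.symm⟩)
    by_cases hb : b = v
    · subst hb
      left
      exact (hR a c).2 (Or.inr ⟨(hR2 a).1 h1.symm, (hR2 c).1 h2⟩)
    by_cases hc : c = v
    · subst hc
      right
      exact (hR b d).2 (Or.inr ⟨(hR2 b).1 h2.symm, (hR2 d).1 h3⟩)
    by_cases hd : d = v
    · subst hd
      left
      exact (hR a c).2 (Or.inr ⟨(hR2 a).1 h4, (hR2 c).1 h3.symm⟩)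
    rw [hR1 _ _ ‹_› ‹_›] at *
    rw [hR1 _ _ ‹_› ‹_›]
    exact hF.noC4 a b c d h1 h2 h3 h4
  · have hvV : v ∉ F.biUnion id := by
      simp only [Finset.mem_biUnion, id, not_exists, not_and]
      exact hv
    rw [hV, hE, Finset.card_insert_of_notMem hvV, Finset.card_union_of_disjoint,
      Finset.card_union_of_disjoint, Finset.card_product, Finset.card_product,
      Finset.card_insert_of_notMem hvT, hTc, Finset.card_singleton]
    · have := hF.edges
      linarith
    · rw [Finset.disjoint_left]
      rintro ⟨a, b⟩ h1 h2
      simp only [Finset.mem_biUnion, Finset.mem_product, Finset.mem_singleton] at h1 h2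
      obtain ⟨S, hS, h3, -⟩ := h1
      rw [h2.1] at h3
      exact hv S hS h3
    · rw [Finset.disjoint_left]
      rintro ⟨a, b⟩ h1 h2
      simp only [Finset.mem_union, Finset.mem_biUnion, Finset.mem_product, Finset.mem_singleton] at h1 h2
      rcases h1 with ⟨S, hS, -, h3⟩ | h1
      · rw [h2.2] at h3
        exact hv S hS h3
      · rw [h1.1] at h2
        exact hvT h2.1
  · intro S
    rw [hmem]
    by_cases hvS : v ∈ S
    · rw [hCin S hvS]
      have hext : ∀ u, Clq F' (insert u S) ↔ insert u S ⊆ insert v T :=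
        fun u => hCin _ (Finset.mem_insert_of_mem hvS)
      simp only [hext]
      constructor
      · rintro (h | ⟨t, ht, rfl⟩)
        · exact absurd hvS (hv S h.2)
        · refine ⟨hcard t ht, Finset.insert_subset_insert v (Finset.erase_subset t T), t, ?_, ?_⟩
          · constructor
            · simp only [Finset.mem_insert, Finset.mem_erase]
              rintro (h | h)
              · exact hvT (h ▸ ht)
              · exact h.1 rfl
            · intro x hx
              simp only [Finset.mem_insert, Finset.mem_erase] at *
              rcases hx with h | h | h
              · right; rwa [h]
              · exact Or.inl h
              · exact Or.inr h.2
          · rintro y ⟨hy1, hy2⟩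
            have := hy2 (Finset.mem_insert_self _ _)
            simp only [Finset.mem_insert, Finset.mem_erase] at *
            tauto
      · rintro ⟨h1, h2, u, ⟨hu1, hu2⟩, -⟩
        right
        have hu3 : u ∈ insert v T := hu2 (Finset.mem_insert_self _ _)
        have hu4 : u ∈ T := by
          rcases Finset.mem_insert.1 hu3 with h | h
          · exact absurd (h ▸ hvS) hu1
          · exact h
        refine ⟨u, hu4, ?_⟩
        symm
        apply Finset.eq_of_subset_of_card_le
        · intro x hx
          have := h2 hx
          have hxu : x ≠ u := fun h => hu1 (h ▸ hx)
          simp only [Finset.mem_insert, Finset.mem_erase] at *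
          tauto
        · rw [hcard u hu4, h1]
    · have hnot : ¬ ∃ t ∈ T, insert v (T.erase t) = S := by
        rintro ⟨t, -, rfl⟩
        exact hvS (Finset.mem_insert_self _ _)
      have hext : ∀ u, u ≠ v → (Clq F' (insert u S) ↔ Clq F (insert u S)) := by
        intro u hu
        apply hCout
        simp only [Finset.mem_insert, not_or]
        exact ⟨hu.symm, hvS⟩
      have hextv : Clq F' (insert v S) ↔ S ⊆ T := by
        rw [hCin _ (Finset.mem_insert_self _ _)]
        constructor
        · intro h x hx
          rcases Finset.mem_insert.1 (h (Finset.mem_insert_of_mem hx)) with h | h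
          · exact absurd (h ▸ hx) hvS
          · exact h
        · exact fun h => Finset.insert_subset_insert v h
      have hnv : ¬ Clq F (insert v S) := fun h =>
        hvl v (h v (Finset.mem_insert_self _ _) v (Finset.mem_insert_self _ _))
      rw [hCout S hvS]
      by_cases hST : S = T
      · subst hST
        simp only [ne_eq, not_true_eq_false, false_and, false_or, hnot, false_iff]
        rintro ⟨-, -, u, hu, huu⟩
        obtain ⟨h1, h2, w, ⟨hw1, hw2⟩, -⟩ := (hF.char S).1 hT
        have hwv : w ≠ v := by rintro rfl; exact hnv hw2
        have e1 := huu w ⟨hw1, (hext w hwv).2 hw2⟩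
        have e2 := huu v ⟨hvS, hextv.2 (le_refl _)⟩
        exact hwv (e1.trans e2.symm)
      · simp only [ne_eq, hST, not_false_eq_true, true_and, hnot, or_false]
        rw [hF.char S]
        refine and_congr_right fun hc => and_congr_right fun _ => ?_
        have : ∀ u, Clq F' (insert u S) ↔ Clq F (insert u S) := by
          intro u
          by_cases hu : u = v
          · subst hu
            rw [hextv]
            constructor
            · intro h
              exact absurd (Finset.eq_of_subset_of_card_le h (by omega)) hST
            · intro h; exact absurd h hnv
          · exact hext u hu
        simp only [this]

theorem good_of_stacked {V : Type*} [DecidableEq V] (n : ℕ) (hn : 3 ≤ n) (F : Finset (Finset V))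
    (h : IsStackedSphere n F) : GoodFam n F := by
  induction h with
  | simplex W hW => exact good_simplex n hn W hW
  | subdivide F T v hF hT hv ih => exact good_step n hn F T v hT hv ih

open Classical in
theorem levels {V : Type*} (n : ℕ) (F1 N : Finset V) (A : V → V → Prop)
    (h1 : F1.card = n) (hN : N.card = n + 1)
    (hnest : ∀ x ∈ F1, ∀ x' ∈ F1, (∀ w ∈ N, A x w → A x' w) ∨ (∀ w ∈ N, A x' w → A x w))
    (hU : ∀ x ∈ F1, (F1.filter fun x' => ∀ w ∈ N, A x w → A x' w).card
      + (N.filter fun w => A x w).card ≤ n + 1)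
    (hL : ∀ x ∈ F1, (F1.filter fun x' => ∀ w ∈ N, A x' w → A x w).card
      + (N.filter fun w => ¬ A x w).card ≤ n + 1) :
    ∃ a b : V → ℕ, Set.InjOn a F1 ∧ (∀ x ∈ F1, 1 ≤ a x ∧ a x ≤ n) ∧ Set.InjOn b N ∧
      (∀ w ∈ N, b w ≤ n) ∧ ∀ x ∈ F1, ∀ w ∈ N, (A x w ↔ n + 1 ≤ a x + b w) := by
  set a : V → ℕ := fun x => (N.filter fun w => A x w).card with ha
  set b : V → ℕ := fun w => (F1.filter fun x => A x w).card with hb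
  set U : V → Finset V := fun x => F1.filter fun x' => ∀ w ∈ N, A x w → A x' w with hUd
  set L : V → Finset V := fun x => F1.filter fun x' => ∀ w ∈ N, A x' w → A x w with hLd
  have hxU : ∀ x ∈ F1, x ∈ U x := fun x hx => Finset.mem_filter.2 ⟨hx, fun _ _ h => h⟩
  have hxL : ∀ x ∈ F1, x ∈ L x := fun x hx => Finset.mem_filter.2 ⟨hx, fun _ _ h => h⟩
  have key : ∀ x ∈ F1, (U x).card + a x = n + 1 ∧ (U x ∩ L x).card = 1 ∧ 1 ≤ a x ∧ a x ≤ n := by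
    intro x hx
    have e1 : (U x).card + a x ≤ n + 1 := hU x hx
    have e2 : (L x).card + (N.filter fun w => ¬ A x w).card ≤ n + 1 := hL x hx
    have e3 : a x + (N.filter fun w => ¬ A x w).card = N.card :=
      Finset.card_filter_add_card_filter_not (s := N) (fun w => A x w)
    have e4 := Finset.card_union_add_card_inter (U x) (L x)
    have e5 : U x ∪ L x = F1 := by
      ext y
      simp only [hUd, hLd, Finset.mem_union, Finset.mem_filter]
      constructor
      · rintro (h | h) <;> exact h.1
      · intro hy
        rcases hnest x hx y hy with h | h
        · exact Or.inl ⟨hy, h⟩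
        · exact Or.inr ⟨hy, h⟩
    have e6 : 1 ≤ (U x ∩ L x).card :=
      Finset.card_pos.2 ⟨x, Finset.mem_inter.2 ⟨hxU x hx, hxL x hx⟩⟩
    have e7 : 1 ≤ (U x).card := Finset.card_pos.2 ⟨x, hxU x hx⟩
    have e8 : 1 ≤ (L x).card := Finset.card_pos.2 ⟨x, hxL x hx⟩
    rw [e5] at e4
    omega
  have hainj : Set.InjOn a F1 := by
    have wl : ∀ x ∈ F1, ∀ x' ∈ F1, a x = a x' → (∀ w ∈ N, A x w → A x' w) → x = x' := by
      intro x hx x' hx' he h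
      have e : (N.filter fun w => A x w) = (N.filter fun w => A x' w) := by
        apply Finset.eq_of_subset_of_card_le
        · intro w hw
          rw [Finset.mem_filter] at hw ⊢
          exact ⟨hw.1, h w hw.1 hw.2⟩
        · exact he.ge
      have h' : ∀ w ∈ N, A x' w → A x w := by
        intro w hw hh
        have : w ∈ N.filter fun w => A x w := by
          rw [e]; exact Finset.mem_filter.2 ⟨hw, hh⟩
        exact (Finset.mem_filter.1 this).2
      refine Finset.card_le_one.1 (key x hx).2.1.le x ?_ x' ?_
      · exact Finset.mem_inter.2 ⟨hxU x hx, hxL x hx⟩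
      · exact Finset.mem_inter.2 ⟨Finset.mem_filter.2 ⟨hx', h⟩, Finset.mem_filter.2 ⟨hx', h'⟩⟩
    intro x hx x' hx' he
    rcases hnest x hx x' hx' with h | h
    · exact wl x hx x' hx' he h
    · exact (wl x' hx' x hx he.symm h).symm
  have hadj : ∀ x ∈ F1, ∀ w ∈ N, (A x w ↔ n + 1 ≤ a x + b w) := by
    intro x hx w hw
    have k := (key x hx).1
    constructor
    · intro h
      have : (U x).card ≤ b w := by
        apply Finset.card_le_card
        intro y hy
        rw [Finset.mem_filter] at hy ⊢
        exact ⟨hy.1, hy.2 w hw h⟩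
      omega
    · intro h
      by_contra hna
      have : b w ≤ ((U x).erase x).card := by
        apply Finset.card_le_card
        intro y hy
        rw [Finset.mem_filter] at hy
        refine Finset.mem_erase.2 ⟨?_, Finset.mem_filter.2 ⟨hy.1, ?_⟩⟩
        · rintro rfl; exact hna hy.2
        · rcases hnest x hx y hy.1 with h | h
          · exact h
          · exact absurd (h w hw hy.2) hna
      rw [Finset.card_erase_of_mem (hxU x hx)] at this
      have e7 : 1 ≤ (U x).card := Finset.card_pos.2 ⟨x, hxU x hx⟩
      omega
  have hbn : ∀ w ∈ N, b w ≤ n := by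
    intro w _
    rw [← h1]
    exact Finset.card_filter_le _ _
  have hasurj : ∀ c, 1 ≤ c → c ≤ n → ∃ x ∈ F1, a x = c := by
    intro c hc1 hc2
    have hs := Finset.surj_on_of_inj_on_of_card_le (s := F1) (t := Finset.Icc 1 n)
      (fun x _ => a x) (fun x hx => Finset.mem_Icc.2 (key x hx).2.2)
      (fun x y hx hy h => hainj hx hy h) (by simp [h1]) c (Finset.mem_Icc.2 ⟨hc1, hc2⟩)
    obtain ⟨x, hx, h⟩ := hs
    exact ⟨x, hx, h.symm⟩
  have hcnt : ∀ c, c ≤ n + 1 → (N.filter fun w => c ≤ b w).card = n + 1 - c := by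
    intro c hc
    rcases Nat.eq_zero_or_pos c with rfl | hc0
    · simp [hN]
    · rcases Nat.lt_or_ge n c with h | h
      · have : (N.filter fun w => c ≤ b w) = ∅ := by
          apply Finset.filter_eq_empty_iff.2
          intro w hw
          have := hbn w hw
          omega
        rw [this, Finset.card_empty]; omega
      · obtain ⟨x, hx, hxa⟩ := hasurj (n + 1 - c) (by omega) (by omega)
        rw [← hxa]
        congr 1
        apply Finset.filter_congr
        intro w hw
        rw [hadj x hx w hw, hxa]
        omega
  refine ⟨a, b, hainj, fun x hx => (key x hx).2.2, ?_, hbn, hadj⟩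
  have hs : Set.SurjOn b N (Finset.range (n + 1)) := by
    intro c hc
    have hc : c < n + 1 := Finset.mem_range.1 hc
    have hlt : (N.filter fun w => c + 1 ≤ b w).card < (N.filter fun w => c ≤ b w).card := by
      rw [hcnt c (by omega), hcnt (c + 1) (by omega)]; omega
    obtain ⟨w, hw1, hw2⟩ := Finset.exists_mem_notMem_of_card_lt_card hlt
    rw [Finset.mem_filter] at hw1 hw2
    refine ⟨w, hw1.1, ?_⟩
    by_contra hne
    exact hw2 ⟨hw1.1, by omega⟩
  have hm : Set.MapsTo b N (Finset.range (n + 1)) := by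
    intro w hw
    have := hbn w hw
    exact Finset.mem_coe.2 (Finset.mem_range.2 (by omega))
  exact Finset.injOn_of_surjOn_of_card_le b hm hs (by simp [hN])

theorem dist_le_two {V : Type*} (F : Finset (Finset V)) (x z y : V) (h1 : Rl F x z)
    (h2 : Rl F z y) : (famSkeleton F).dist x y ≤ 2 := by
  have w : ∀ a b, Rl F a b → ∃ p : (famSkeleton F).Walk a b, p.length ≤ 1 := by
    intro a b h
    by_cases hab : a = b
    · subst hab
      exact ⟨SimpleGraph.Walk.nil, by simp⟩
    · have : (famSkeleton F).Adj a b := by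
        rw [famSkeleton, SimpleGraph.fromRel_adj]
        exact ⟨hab, Or.inl h⟩
      exact ⟨this.toWalk, by simp⟩
  obtain ⟨p, hp⟩ := w _ _ h1
  obtain ⟨r, hr⟩ := w _ _ h2
  have := SimpleGraph.dist_le (p.append r)
  rw [SimpleGraph.Walk.length_append] at this
  omega

open Classical in
theorem exists_pos {V : Type*} [DecidableEq V] (n : ℕ)
    (F : Finset (Finset V)) (hF : GoodFam n F)
    (hcard : (F.biUnion id).card = 3 * n + 1)
    (F1 F2 : Finset V) (hF1 : F1 ∈ F) (hF2 : F2 ∈ F)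
    (φ : V → V) (hφ : Set.BijOn φ ↑F1 ↑F2)
    (hD : ∀ x ∈ F1, ∀ z, Rl F x z → Rl F z (φ x) → False)
    (q : V → V) (hq1 : ∀ w, w ∉ F2 → q w = w) (hq2 : ∀ v ∈ F1, q (φ v) = v) :
    ∃ pos : V → ℕ, Set.InjOn pos (F.biUnion id : Finset V) ∧
      (∀ v ∈ F.biUnion id, pos v ≤ 3 * n) ∧
      (∀ u ∈ F.biUnion id, ∀ v ∈ F.biUnion id, Rl F u v ↔ (pos u ≤ pos v + n ∧ pos v ≤ pos u + n)) ∧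
      (∀ x ∈ F1, pos x = pos (φ x) + (2 * n + 1)) := by
  set W := F.biUnion id with hW
  have hc1 := hF.card F1 hF1
  have hc2 := hF.card F2 hF2
  have h11 : ∀ a ∈ F1, ∀ b ∈ F1, Rl F a b := fun a ha b hb => ⟨F1, hF1, ha, hb⟩
  have h22 : ∀ a ∈ F2, ∀ b ∈ F2, Rl F a b := fun a ha b hb => ⟨F2, hF2, ha, hb⟩
  have h12 : ∀ x ∈ F1, ∀ y ∈ F2, ¬ Rl F x y := fun x hx y hy h =>
    hD x hx y h (h22 _ hy _ (hφ.mapsTo hx))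
  have hdisj : ∀ x ∈ F1, x ∉ F2 := fun x hx hx2 => h12 x hx x hx2 (h11 x hx x hx)
  have hsub1 : F1 ⊆ W := Finset.subset_biUnion_of_mem id hF1
  have hsub2 : F2 ⊆ W := Finset.subset_biUnion_of_mem id hF2
  set N := (W \ F2) \ F1 with hNdef
  have hW2c : (W \ F2).card = 2 * n + 1 := by
    rw [Finset.card_sdiff_of_subset hsub2]; omega
  have hF1W2 : F1 ⊆ W \ F2 := fun x hx => Finset.mem_sdiff.2 ⟨hsub1 hx, hdisj x hx⟩
  have hNc : N.card = n + 1 := by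
    rw [Finset.card_sdiff_of_subset hF1W2]; omega
  have hNm : ∀ w, w ∈ N ↔ w ∈ W ∧ w ∉ F2 ∧ w ∉ F1 := by
    intro w; simp only [hNdef, Finset.mem_sdiff, and_assoc]
  have hφs : ∀ y ∈ F2, ∃ x ∈ F1, φ x = y := fun y hy => hφ.surjOn hy
  -- completeness by counting
  set R := F.biUnion fun S => S ×ˢ S with hRdef
  have hRm : ∀ a b, (a, b) ∈ R ↔ Rl F a b := by
    intro a b
    simp only [hRdef, Finset.mem_biUnion, Finset.mem_product, Rl]
  have hRW : ∀ a b, Rl F a b → a ∈ W ∧ b ∈ W := by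
    rintro a b ⟨S, hS, ha, hb⟩
    have := Finset.subset_biUnion_of_mem id hS
    exact ⟨this ha, this hb⟩
  have hqW : ∀ a ∈ W, q a ∈ W \ F2 := by
    intro a ha
    by_cases h : a ∈ F2
    · obtain ⟨x, hx, rfl⟩ := hφs a h
      rw [hq2 x hx]; exact hF1W2 hx
    · rw [hq1 a h]; exact Finset.mem_sdiff.2 ⟨ha, h⟩
  have hqc : ∀ a c, q a = q c → a = c ∨ (a ∈ F1 ∧ c = φ a) ∨ (c ∈ F1 ∧ a = φ c) := by
    intro a c h
    by_cases h1 : a ∈ F2 <;> by_cases h2 : c ∈ F2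
    · obtain ⟨x, hx, rfl⟩ := hφs a h1
      obtain ⟨y, hy, rfl⟩ := hφs c h2
      rw [hq2 x hx, hq2 y hy] at h
      left; rw [h]
    · obtain ⟨x, hx, rfl⟩ := hφs a h1
      rw [hq2 x hx, hq1 c h2] at h
      subst h
      exact Or.inr (Or.inr ⟨hx, rfl⟩)
    · obtain ⟨x, hx, rfl⟩ := hφs c h2
      rw [hq2 x hx, hq1 a h1] at h
      subst h
      exact Or.inr (Or.inl ⟨hx, rfl⟩)
    · rw [hq1 a h1, hq1 c h2] at h
      exact Or.inl h
  have hR'c : (R \ F2 ×ˢ F2).card = (2 * n + 1) * (2 * n + 1) := by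
    have hs : F2 ×ˢ F2 ⊆ R := by
      rintro ⟨a, b⟩ h
      rw [Finset.mem_product] at h
      exact (hRm a b).2 (h22 a h.1 b h.2)
    rw [Finset.card_sdiff_of_subset hs, Finset.card_product, hc2]
    have e := hF.edges
    rw [← hW, ← hRdef, hcard] at e
    have : R.card = n * n + (2 * n + 1) * (2 * n + 1) := by nlinarith
    omega
  have hcomp : ∀ a ∈ W \ F2, ∀ b ∈ W \ F2, ∃ a' b', Rl F a' b' ∧ a = q a' ∧ b = q b' := by
    intro a ha b hb
    have hφm : ∀ x ∈ F1, φ x ∈ F2 := fun x hx => hφ.mapsTo hx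
    obtain ⟨p, hp, he⟩ := Finset.surj_on_of_inj_on_of_card_le (s := R \ F2 ×ˢ F2)
      (t := (W \ F2) ×ˢ (W \ F2)) (fun p _ => (q p.1, q p.2))
      (by
        rintro ⟨a, b⟩ h
        have := hRW a b ((hRm a b).1 (Finset.mem_sdiff.1 h).1)
        exact Finset.mem_product.2 ⟨hqW a this.1, hqW b this.2⟩)
      (by
        rintro ⟨a, b⟩ ⟨c, d⟩ h1 h2 h
        simp only [Prod.mk.injEq, Finset.mem_sdiff, Finset.mem_product, hRm] at h h1 h2 ⊢
        rcases hqc a c h.1 with e1 | ⟨e1, e1'⟩ | ⟨e1, e1'⟩ <;>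
        rcases hqc b d h.2 with e2 | ⟨e2, e2'⟩ | ⟨e2, e2'⟩
        · exact ⟨e1, e2⟩
        · subst e1 e2'
          exact (hD b e2 a h1.1.symm h2.1).elim
        · subst e1 e2'
          exact (hD d e2 a h2.1.symm h1.1).elim
        · subst e1' e2
          exact (hD a e1 b h1.1 h2.1.symm).elim
        · subst e1' e2'
          exact (h2.2 ⟨hφm _ e1, hφm _ e2⟩).elim
        · subst e1' e2'
          exact (h12 a e1 _ (hφm _ e2) h1.1).elim
        · subst e1' e2
          exact (hD c e1 b h2.1 h1.1.symm).elim
        · subst e1' e2'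
          exact (h12 b e2 _ (hφm _ e1) h1.1.symm).elim
        · subst e1' e2'
          exact (h1.2 ⟨hφm _ e1, hφm _ e2⟩).elim)
      (by rw [Finset.card_product, hW2c, hR'c]) (a, b) (Finset.mem_product.2 ⟨ha, hb⟩)
    rw [Prod.mk.injEq] at he
    exact ⟨p.1, p.2, (hRm _ _).1 (Finset.mem_sdiff.1 hp).1, he.1, he.2⟩
  have hqN : ∀ w ∈ N, ∀ z, w = q z → z = w := by
    intro w hw z hz
    rw [hNm] at hw
    have : q w = q z := by rw [hq1 w hw.2.1]; exact hz
    rcases hqc _ _ this with h | h | h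
    · exact h.symm
    · exact absurd h.1 hw.2.2
    · exact absurd (h.2 ▸ hφ.mapsTo h.1) hw.2.1
  have hNW : ∀ w ∈ N, w ∈ W \ F2 := fun w hw => (Finset.mem_sdiff.1 hw).1
  have hNN : ∀ w ∈ N, ∀ w' ∈ N, Rl F w w' := by
    intro w hw w' hw'
    obtain ⟨a, b, h, e1, e2⟩ := hcomp w (hNW w hw) w' (hNW w' hw')
    rwa [hqN w hw a e1, hqN w' hw' b e2] at h
  have h1N : ∀ x ∈ F1, ∀ w ∈ N, (Rl F (φ x) w ↔ ¬ Rl F x w) := by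
    intro x hx w hw
    constructor
    · intro h h'
      exact hD x hx w h' h.symm
    · intro h'
      obtain ⟨a, b, h, e1, e2⟩ := hcomp x (hF1W2 hx) w (hNW w hw)
      rw [hqN w hw b e2] at h
      have : q x = q a := by rw [hq1 x (hdisj x hx)]; exact e1
      rcases hqc _ _ this with h3 | h3 | h3
      · exact absurd (h3 ▸ h) h'
      · rwa [h3.2] at h
      · exact absurd (h3.2 ▸ hφ.mapsTo h3.1) (hdisj x hx)
  have hdN1 : ∀ w ∈ N, w ∉ F1 := fun w hw => ((hNm w).1 hw).2.2
  have hdN2 : ∀ w ∈ N, w ∉ F2 := fun w hw => ((hNm w).1 hw).2.1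
  obtain ⟨a, b, ha, har, hb, hbr, hab⟩ := levels n F1 N (Rl F) hc1 hNc
    (by
      intro x hx x' hx'
      by_contra hcon
      rw [not_or] at hcon
      obtain ⟨h1, h2⟩ := hcon
      push Not at h1 h2
      obtain ⟨w, hw, h3, h4⟩ := h1
      obtain ⟨w', hw', h5, h6⟩ := h2
      rcases hF.noC4 x w w' x' h3 (hNN w hw w' hw') h5.symm (h11 x' hx' x hx) with h | h
      · exact h6 h
      · exact h4 h.symm)
    (by
      intro x hx
      rw [← Finset.card_union_of_disjoint]
      · apply hF.noK
        intro u hu v hv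
        simp only [Finset.mem_union, Finset.mem_filter] at hu hv
        rcases hu with hu | hu <;> rcases hv with hv | hv
        · exact h11 u hu.1 v hv.1
        · exact hu.2 v hv.1 hv.2
        · exact (hv.2 u hu.1 hu.2).symm
        · exact hNN u hu.1 v hv.1
      · rw [Finset.disjoint_left]
        intro u hu hv
        exact hdN1 u (Finset.mem_filter.1 hv).1 (Finset.mem_filter.1 hu).1)
    (by
      intro x hx
      have hi : ((F1.filter fun x' => ∀ w ∈ N, Rl F x' w → Rl F x w).image φ).card =
          (F1.filter fun x' => ∀ w ∈ N, Rl F x' w → Rl F x w).card := by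
        apply Finset.card_image_of_injOn
        intro u hu v hv h
        exact hφ.injOn (Finset.mem_filter.1 hu).1 (Finset.mem_filter.1 hv).1 h
      rw [← hi, ← Finset.card_union_of_disjoint]
      · apply hF.noK
        have hm : ∀ u x', x' ∈ F1 → (∀ w ∈ N, Rl F x' w → Rl F x w) → u ∈ N → ¬ Rl F x u →
            Rl F (φ x') u := by
          intro u x' hx' h hu hxu
          exact (h1N x' hx' u hu).2 fun h' => hxu (h u hu h')
        intro u hu v hv
        simp only [Finset.mem_union, Finset.mem_filter, Finset.mem_image] at hu hv
        rcases hu with ⟨x', hu, rfl⟩ | hu <;> rcases hv with ⟨x'', hv, rfl⟩ | hv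
        · exact h22 _ (hφ.mapsTo hu.1) _ (hφ.mapsTo hv.1)
        · exact hm v x' hu.1 hu.2 hv.1 hv.2
        · exact (hm u x'' hv.1 hv.2 hu.1 hu.2).symm
        · exact hNN u hu.1 v hv.1
      · rw [Finset.disjoint_left]
        intro u hu hv
        obtain ⟨x', hx', rfl⟩ := Finset.mem_image.1 hu
        exact hdN2 _ (Finset.mem_filter.1 hv).1 (hφ.mapsTo (Finset.mem_filter.1 hx').1))
  set pos : V → ℕ := fun u => if u ∈ F2 then n - a (q u) else if u ∈ F1 then 3 * n + 1 - a u
    else n + b u with hpos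
  have p1 : ∀ x ∈ F1, pos x = 3 * n + 1 - a x := by
    intro x hx
    simp only [hpos, hdisj x hx, hx, if_true, if_false]
  have p2 : ∀ x ∈ F1, pos (φ x) = n - a x := by
    intro x hx
    have : φ x ∈ F2 := hφ.mapsTo hx
    simp only [hpos, this, if_true, hq2 x hx]
  have pN : ∀ w ∈ N, pos w = n + b w := by
    intro w hw
    simp only [hpos, hdN1 w hw, hdN2 w hw, if_false]
  have hcase : ∀ u ∈ W, u ∈ F1 ∨ u ∈ N ∨ ∃ x ∈ F1, φ x = u := by
    intro u hu
    by_cases h1 : u ∈ F1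
    · exact Or.inl h1
    by_cases h2 : u ∈ F2
    · exact Or.inr (Or.inr (hφs u h2))
    · exact Or.inr (Or.inl ((hNm u).2 ⟨hu, h2, h1⟩))
  refine ⟨pos, ?_, ?_, ?_, ?_⟩
  · intro u hu v hv h
    rcases hcase u hu with h1 | h1 | ⟨x, h1, rfl⟩ <;> rcases hcase v hv with h2 | h2 | ⟨y, h2, rfl⟩
    · have := har u h1
      have := har v h2
      rw [p1 u h1, p1 v h2] at h
      exact ha h1 h2 (by omega)
    · have := har u h1
      have := hbr v h2
      rw [p1 u h1, pN v h2] at h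
      omega
    · have := har u h1
      have := har y h2
      rw [p1 u h1, p2 y h2] at h
      omega
    · have := hbr u h1
      have := har v h2
      rw [pN u h1, p1 v h2] at h
      omega
    · rw [pN u h1, pN v h2] at h
      exact hb h1 h2 (by omega)
    · have := har y h2
      rw [pN u h1, p2 y h2] at h
      omega
    · have := har x h1
      have := har v h2
      rw [p2 x h1, p1 v h2] at h
      omega
    · have := har x h1
      rw [p2 x h1, pN v h2] at h
      omega
    · have := har x h1
      have := har y h2
      rw [p2 x h1, p2 y h2] at h
      rw [ha h1 h2 (by omega)]
  · intro u hu
    rcases hcase u hu with h1 | h1 | ⟨x, h1, rfl⟩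
    · have := har u h1
      rw [p1 u h1]; omega
    · have := hbr u h1
      rw [pN u h1]; omega
    · rw [p2 x h1]; omega
  · intro u hu v hv
    rcases hcase u hu with h1 | h1 | ⟨x, h1, rfl⟩ <;> rcases hcase v hv with h2 | h2 | ⟨y, h2, rfl⟩
    · have := har u h1
      have := har v h2
      simp only [p1 u h1, p1 v h2, h11 u h1 v h2, true_iff]
      omega
    · have := har u h1
      have := hbr v h2
      rw [hab u h1 v h2, p1 u h1, pN v h2]
      omega
    · have := har u h1
      have := har y h2
      simp only [p1 u h1, p2 y h2, h12 u h1 _ (hφ.mapsTo h2), false_iff]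
      omega
    · have := har v h2
      have := hbr u h1
      rw [show Rl F u v ↔ Rl F v u from ⟨Rl.symm, Rl.symm⟩, hab v h2 u h1, p1 v h2, pN u h1]
      omega
    · have := hbr u h1
      have := hbr v h2
      simp only [pN u h1, pN v h2, hNN u h1 v h2, true_iff]
      omega
    · have := har y h2
      rw [show Rl F u (φ y) ↔ Rl F (φ y) u from ⟨Rl.symm, Rl.symm⟩, h1N y h2 u h1, hab y h2 u h1,
        p2 y h2, pN u h1]
      omega
    · have := har x h1
      have := har v h2
      have hh : ¬ Rl F (φ x) v := fun h => h12 v h2 _ (hφ.mapsTo h1) h.symm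
      simp only [p2 x h1, p1 v h2, hh, false_iff]
      omega
    · have := har x h1
      rw [h1N x h1 v h2, hab x h1 v h2, p2 x h1, pN v h2]
      omega
    · have hh : Rl F (φ x) (φ y) := h22 _ (hφ.mapsTo h1) _ (hφ.mapsTo h2)
      simp only [p2 x h1, p2 y h2, hh, true_iff]
      omega
  · intro x hx
    have := har x hx
    rw [p1 x hx, p2 x hx]; omega

def EE (n a k : ℕ) : Finset ℕ := ((Finset.range (n + 1)).erase k).image (fun j => a + j)

theorem mem_EE (n a k p : ℕ) : p ∈ EE n a k ↔ a ≤ p ∧ p ≤ a + n ∧ p ≠ a + k := by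
  simp only [EE, Finset.mem_image, Finset.mem_erase, Finset.mem_range]
  constructor
  · rintro ⟨j, ⟨h1, h2⟩, rfl⟩; omega
  · intro h; exact ⟨p - a, by omega, by omega⟩

theorem card_EE (n a k : ℕ) (hk : k ≤ n) : (EE n a k).card = n := by
  rw [EE, Finset.card_image_of_injective _ (fun x y h => by simpa using h),
    Finset.card_erase_of_mem (Finset.mem_range.2 (by omega)), Finset.card_range]
  rfl

theorem zcast_inj (n x y : ℕ) (h : (x : ZMod (2 * n + 1)) = y) (h1 : x < y + (2 * n + 1))
    (h2 : y < x + (2 * n + 1)) : x = y := by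
  rw [ZMod.natCast_eq_natCast_iff] at h
  rcases le_total x y with hle | hle
  · have := (Nat.modEq_iff_dvd' hle).1 h
    have := Nat.eq_zero_of_dvd_of_lt this (by omega)
    omega
  · have := (Nat.modEq_iff_dvd' hle).1 h.symm
    have := Nat.eq_zero_of_dvd_of_lt this (by omega)
    omega

theorem kuhnel_iff (n : ℕ) (K : Finset (ZMod (2 * n + 1))) :
    KuhnelFacet n K ↔ ∃ a k : ℕ, a ≤ 2 * n ∧ 0 < k ∧ k < n ∧
      K = (EE n a k).image (fun p : ℕ => (p : ZMod (2 * n + 1))) := by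
  have hinj : ∀ a : ZMod (2 * n + 1), Set.InjOn (fun k : ℕ => a + (k : ZMod (2 * n + 1)))
      (Finset.range (n + 1) : Finset ℕ) := by
    intro a x hx y hy h
    have hx := Finset.mem_range.1 hx
    have hy := Finset.mem_range.1 hy
    exact zcast_inj n x y (add_left_cancel h) (by omega) (by omega)
  have hcast : ∀ a k : ℕ, (EE n a k).image (fun p : ℕ => (p : ZMod (2 * n + 1))) =
      ((Finset.range (n + 1)).erase k).image
        (fun j : ℕ => (a : ZMod (2 * n + 1)) + (j : ZMod (2 * n + 1))) := by
    intro a k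
    rw [EE, Finset.image_image]
    apply Finset.image_congr
    intro j _
    simp
  constructor
  · rintro ⟨hc, ⟨a0, ha⟩, hb⟩
    have hIc : ((Finset.range (n + 1)).image
        (fun k : ℕ => a0 + (k : ZMod (2 * n + 1)))).card = n + 1 := by
      rw [Finset.card_image_of_injOn (hinj a0), Finset.card_range]
    have hlt : K.card < ((Finset.range (n + 1)).image
        (fun k : ℕ => a0 + (k : ZMod (2 * n + 1)))).card := by omega
    obtain ⟨c, hc1, hc2⟩ := Finset.exists_mem_notMem_of_card_lt_card hlt
    obtain ⟨k, hk, rfl⟩ := Finset.mem_image.1 hc1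
    have hk' := Finset.mem_range.1 hk
    have hKe : K = ((Finset.range (n + 1)).erase k).image
        (fun k : ℕ => a0 + (k : ZMod (2 * n + 1))) := by
      apply Finset.eq_of_subset_of_card_le
      · intro x hx
        obtain ⟨j, hj, rfl⟩ := Finset.mem_image.1 (ha hx)
        refine Finset.mem_image.2 ⟨j, Finset.mem_erase.2 ⟨?_, hj⟩, rfl⟩
        rintro rfl
        exact hc2 hx
      · refine Finset.card_image_le.trans ?_
        rw [Finset.card_erase_of_mem hk, Finset.card_range, hc]
        exact le_refl _
    refine ⟨a0.val, k, ?_, ?_, ?_, ?_⟩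
    · have := ZMod.val_lt a0
      omega
    · by_contra h0
      have h0 : k = 0 := by omega
      subst h0
      apply hb (a0 + 1)
      rw [hKe]
      ext z
      simp only [Finset.mem_image, Finset.mem_erase, Finset.mem_range]
      constructor
      · rintro ⟨j, ⟨h1, h2⟩, rfl⟩
        refine ⟨j - 1, by omega, ?_⟩
        obtain ⟨i, rfl⟩ : ∃ i, j = i + 1 := ⟨j - 1, by omega⟩
        simp only [Nat.add_sub_cancel]
        push_cast
        ring
      · rintro ⟨j, h1, rfl⟩
        refine ⟨j + 1, ⟨by omega, by omega⟩, ?_⟩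
        push_cast
        ring
    · by_contra h0
      have h0 : k = n := by omega
      subst h0
      apply hb a0
      rw [hKe]
      congr 1
      ext j
      simp only [Finset.mem_erase, Finset.mem_range]
      omega
    · rw [hcast, hKe, ZMod.natCast_zmod_val]
  · rintro ⟨a, k, ha, hk0, hkn, rfl⟩
    refine ⟨?_, ⟨a, ?_⟩, ?_⟩
    · rw [Finset.card_image_of_injOn, card_EE n a k hkn.le]
      intro x hx y hy h
      have hx := (mem_EE n a k x).1 hx
      have hy := (mem_EE n a k y).1 hy
      exact zcast_inj n x y h (by omega) (by omega)
    · rw [hcast]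
      exact Finset.image_subset_image (Finset.erase_subset _ _)
    · intro b hb
      have h1 : ((a : ℕ) : ZMod (2 * n + 1)) ∈
          (EE n a k).image (fun p : ℕ => (p : ZMod (2 * n + 1))) :=
        Finset.mem_image.2 ⟨a, (mem_EE n a k a).2 (by omega), rfl⟩
      have h2 : ((a + n : ℕ) : ZMod (2 * n + 1)) ∈
          (EE n a k).image (fun p : ℕ => (p : ZMod (2 * n + 1))) :=
        Finset.mem_image.2 ⟨a + n, (mem_EE n a k _).2 (by omega), rfl⟩
      rw [hb, Finset.mem_image] at h1 h2
      obtain ⟨i, hi, h1⟩ := h1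
      obtain ⟨j, hj, h2⟩ := h2
      rw [Finset.mem_range] at hi hj
      have : ((i + n : ℕ) : ZMod (2 * n + 1)) = (j : ℕ) := by
        push_cast at h2 ⊢
        rw [← h1, add_assoc] at h2
        exact (add_left_cancel h2).symm
      have := zcast_inj n _ _ this (by omega) (by omega)
      omega

theorem facet_iff {V : Type*} [DecidableEq V] (n : ℕ) (hn : 2 ≤ n)
    (F : Finset (Finset V)) (hF : GoodFam n F)
    (F1 F2 : Finset V) (hF1 : F1 ∈ F) (hF2 : F2 ∈ F)
    (pos : V → ℕ) (hinj : Set.InjOn pos (F.biUnion id : Finset V))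
    (hle : ∀ v ∈ F.biUnion id, pos v ≤ 3 * n)
    (hsurj : ∀ p, p ≤ 3 * n → ∃ v ∈ F.biUnion id, pos v = p)
    (hR : ∀ u ∈ F.biUnion id, ∀ v ∈ F.biUnion id,
      Rl F u v ↔ (pos u ≤ pos v + n ∧ pos v ≤ pos u + n))
    (h1 : ∀ v ∈ F.biUnion id, v ∈ F1 ↔ 2 * n + 1 ≤ pos v)
    (h2 : ∀ v ∈ F.biUnion id, v ∈ F2 ↔ pos v < n)
    (S : Finset V) :
    (S ≠ F2 ∧ S ≠ F1 ∧ S ∈ F) ↔ S ⊆ F.biUnion id ∧ ∃ a k : ℕ, a ≤ 2 * n ∧ 0 < k ∧ k < n ∧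
      S.image pos = EE n a k := by
  set W := F.biUnion id with hW
  have hFW : ∀ S ∈ F, S ⊆ W := fun S hS => Finset.subset_biUnion_of_mem id hS
  have hclq : ∀ Q, Q ⊆ W → (Clq F Q ↔ ∀ u ∈ Q, ∀ v ∈ Q, pos u ≤ pos v + n) := by
    intro Q hQ
    constructor
    · intro h u hu v hv
      exact ((hR u (hQ hu) v (hQ hv)).1 (h u hu v hv)).1
    · intro h u hu v hv
      exact (hR u (hQ hu) v (hQ hv)).2 ⟨h u hu v hv, h v hv u hu⟩
  have hclqW : ∀ Q, Clq F Q → Q ⊆ W := by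
    intro Q hQ u hu
    obtain ⟨T, hT, h, -⟩ := hQ u hu u hu
    exact hFW T hT h
  constructor
  · rintro ⟨hS2, hS1, hS⟩
    have hSW := hFW S hS
    refine ⟨hSW, ?_⟩
    obtain ⟨hc, hcl, u, ⟨hu1, hu2⟩, huu⟩ := (hF.char S).1 hS
    have hSn : S.Nonempty := Finset.card_pos.1 (by omega)
    obtain ⟨x, hx, hxm⟩ := Finset.exists_min_image S pos hSn
    obtain ⟨y, hy, hym⟩ := Finset.exists_max_image S pos hSn
    have hcl' := (hclq S hSW).1 hcl
    have hyx := hcl' y hy x hx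
    have hPc : (S.image pos).card = n := by
      rw [Finset.card_image_of_injOn (hinj.mono hSW), hc]
    have hsub : S.image pos ⊆ Finset.Icc (pos x) (pos y) := by
      intro p hp
      obtain ⟨z, hz, rfl⟩ := Finset.mem_image.1 hp
      exact Finset.mem_Icc.2 ⟨hxm z hz, hym z hz⟩
    have hcc := Finset.card_le_card hsub
    rw [hPc, Nat.card_Icc] at hcc
    have hyle := hle y (hSW hy)
    rcases Nat.lt_or_ge (pos y) (pos x + n) with hlt | hge
    · exfalso
      have hy' : pos y = pos x + n - 1 := by omega
      have hPe : S.image pos = Finset.Icc (pos x) (pos y) := by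
        apply Finset.eq_of_subset_of_card_le hsub
        rw [hPc, Nat.card_Icc]; omega
      have hmem : ∀ z ∈ W, pos x ≤ pos z → pos z ≤ pos y → z ∈ S := by
        intro z hz hz1 hz2
        have : pos z ∈ S.image pos := by rw [hPe]; exact Finset.mem_Icc.2 ⟨hz1, hz2⟩
        obtain ⟨z', hz', he⟩ := Finset.mem_image.1 this
        rwa [← hinj (hSW hz') hz he]
      have hext : ∀ z ∈ W, pos z + 1 = pos x ∨ pos z = pos y + 1 → z = u := by
        intro z hz hzp
        apply huu
        refine ⟨?_, ?_⟩
        · intro hzS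
          have := hxm z hzS
          have := hym z hzS
          omega
        · rw [hclq _ (Finset.insert_subset hz hSW)]
          have hb : ∀ w ∈ insert z S, (pos z ≤ pos w + n ∧ pos w ≤ pos z + n) := by
            intro w hw
            rcases Finset.mem_insert.1 hw with h | h
            · rw [h]; omega
            · have := hxm w h
              have := hym w h
              omega
          intro c hc d hd
          rcases Finset.mem_insert.1 hc with h | h
          · rw [h]; exact (hb d hd).1
          · rcases Finset.mem_insert.1 hd with h' | h'
            · rw [h']; exact (hb c hc).2
            · exact hcl' c h d h'
      by_cases hx0 : pos x = 0
      · apply hS2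
        ext z
        constructor
        · intro hz
          rw [h2 z (hSW hz)]
          have := hym z hz
          omega
        · intro hz
          have := (h2 z (hFW F2 hF2 hz)).1 hz
          exact hmem z (hFW F2 hF2 hz) (by omega) (by omega)
      by_cases hy0 : pos y = 3 * n
      · apply hS1
        ext z
        constructor
        · intro hz
          rw [h1 z (hSW hz)]
          have := hxm z hz
          omega
        · intro hz
          have := (h1 z (hFW F1 hF1 hz)).1 hz
          have := hle z (hFW F1 hF1 hz)
          exact hmem z (hFW F1 hF1 hz) (by omega) (by omega)
      obtain ⟨z1, hz1, e1⟩ := hsurj (pos x - 1) (by omega)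
      obtain ⟨z2, hz2, e2⟩ := hsurj (pos y + 1) (by omega)
      have f1 := hext z1 hz1 (by omega)
      have f2 := hext z2 hz2 (by omega)
      rw [f1] at e1
      rw [f2] at e2
      omega
    · have hy' : pos y = pos x + n := by omega
      rw [hy'] at hsub
      have hlt : (S.image pos).card < (Finset.Icc (pos x) (pos x + n)).card := by
        rw [hPc, Nat.card_Icc]; omega
      obtain ⟨c, hc1, hc2⟩ := Finset.exists_mem_notMem_of_card_lt_card hlt
      rw [Finset.mem_Icc] at hc1
      have hcx : c ≠ pos x := by rintro rfl; exact hc2 (Finset.mem_image_of_mem _ hx)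
      have hcy : c ≠ pos y := by rintro rfl; exact hc2 (Finset.mem_image_of_mem _ hy)
      refine ⟨pos x, c - pos x, by omega, by omega, by omega, ?_⟩
      apply Finset.eq_of_subset_of_card_le
      · intro p hp
        have := Finset.mem_Icc.1 (hsub hp)
        have hpc : p ≠ c := by rintro rfl; exact hc2 hp
        rw [mem_EE]; omega
      · rw [card_EE _ _ _ (by omega), hPc]
  · rintro ⟨hSW, a, k, ha, hk0, hkn, hP⟩
    have hSm : ∀ z ∈ W, z ∈ S ↔ (a ≤ pos z ∧ pos z ≤ a + n ∧ pos z ≠ a + k) := by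
      intro z hz
      rw [← mem_EE, ← hP, Finset.mem_image]
      constructor
      · intro h; exact ⟨z, h, rfl⟩
      · rintro ⟨z', hz', he⟩
        rwa [← hinj (hSW hz') hz he]
    obtain ⟨x, hx, hxp⟩ := hsurj a (by omega)
    obtain ⟨y, hy, hyp⟩ := hsurj (a + n) (by omega)
    obtain ⟨c, hc, hcp⟩ := hsurj (a + k) (by omega)
    have hxS := (hSm x hx).2 (by omega)
    have hyS := (hSm y hy).2 (by omega)
    refine ⟨?_, ?_, ?_⟩
    · rintro rfl
      have := (h2 y hy).1 hyS
      omega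
    · rintro rfl
      have := (h1 x hx).1 hxS
      omega
    · rw [hF.char]
      refine ⟨?_, ?_, c, ⟨?_, ?_⟩, ?_⟩
      · rw [← Finset.card_image_of_injOn (hinj.mono hSW), hP, card_EE _ _ _ hkn.le]
      · rw [hclq S hSW]
        intro u hu v hv
        have := (hSm u (hSW hu)).1 hu
        have := (hSm v (hSW hv)).1 hv
        omega
      · rw [hSm c hc]; omega
      · rw [hclq _ (Finset.insert_subset hc hSW)]
        have hb : ∀ w ∈ insert c S, a ≤ pos w ∧ pos w ≤ a + n := by
          intro w hw
          rcases Finset.mem_insert.1 hw with h | h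
          · rw [h]; omega
          · have := (hSm w (hSW h)).1 h
            omega
        intro u hu v hv
        have := hb u hu
        have := hb v hv
        omega
      · rintro z ⟨hz1, hz2⟩
        have hsub := hclqW _ hz2
        have hz := hsub (Finset.mem_insert_self z S)
        have hz3 := (hclq _ hsub).1 hz2
        have e1 := hz3 z (Finset.mem_insert_self z S) x (Finset.mem_insert_of_mem hxS)
        have e2 := hz3 y (Finset.mem_insert_of_mem hyS) z (Finset.mem_insert_self z S)
        apply hinj hz hc
        rw [hSm z hz] at hz1
        omega

/-- uniqueness of the MISS: let `F` be a stacked `(n-1)`-sphere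
(`n ≥ 5`) with `3n+1` vertices, let `F₁ ≠ F₂` be facets of `F`, `φ : F₁ → F₂` a
bijection moving every vertex to distance `≥ 3` in the 1-skeleton, `q` the
vertex map which is the identity off `F₂` and sends `φ(v)` back to `v`, and let
`M` be the resulting identified stacked sphere on the `2n+1` vertices
`V(F) \ F₂`.  Then `M` is combinatorially isomorphic to Kühnel's complex `K_n`. -/
theorem miss_unique {V : Type*} [DecidableEq V] (n : ℕ) (hn : 5 ≤ n)
    (F : Finset (Finset V)) (hF : IsStackedSphere n F)
    (hcard : (F.biUnion id).card = 3 * n + 1)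
    (F1 F2 : Finset V) (hF1 : F1 ∈ F) (hF2 : F2 ∈ F) (hne : F1 ≠ F2)
    (φ : V → V) (hφ : Set.BijOn φ ↑F1 ↑F2)
    (hdist : ∀ v ∈ F1, 3 ≤ (famSkeleton F).dist v (φ v))
    (q : V → V) (hq1 : ∀ w, w ∉ F2 → q w = w) (hq2 : ∀ v ∈ F1, q (φ v) = v)
    (M : Finset (Finset V)) (hM : M = ((F.erase F1).erase F2).image (fun S => S.image q)) :
    ∃ ψ : V → ZMod (2 * n + 1),
      Set.BijOn ψ ↑(F.biUnion id \ F2) Set.univ ∧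
      ∀ S : Finset V, S ⊆ F.biUnion id \ F2 →
        (S ∈ M ↔ KuhnelFacet n (S.image ψ)) := by
  have hG := good_of_stacked n (by omega) F hF
  have hD : ∀ x ∈ F1, ∀ z, Rl F x z → Rl F z (φ x) → False := by
    intro x hx z h1 h2
    have := hdist x hx
    have := dist_le_two F x z (φ x) h1 h2
    omega
  obtain ⟨pos, hinj, hle, hR, hsh⟩ := exists_pos n F hG hcard F1 F2 hF1 hF2 φ hφ hD q hq1 hq2
  have hfacet := facet_iff n (by omega) F hG F1 F2 hF1 hF2 pos hinj hle
  have hc2 := hG.card F2 hF2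
  have hc1 := hG.card F1 hF1
  have hsub1 : F1 ⊆ F.biUnion id := Finset.subset_biUnion_of_mem id hF1
  have hsub2 : F2 ⊆ F.biUnion id := Finset.subset_biUnion_of_mem id hF2
  set W := F.biUnion id with hW
  have hsurj : ∀ p, p ≤ 3 * n → ∃ v ∈ W, pos v = p := by
    intro p hp
    obtain ⟨x, hx, h⟩ := Finset.surj_on_of_inj_on_of_card_le (s := W) (t := Finset.range (3 * n + 1))
      (fun x _ => pos x) (fun x hx => Finset.mem_range.2 (by have := hle x hx; omega))
      (fun x y hx hy h => hinj hx hy h) (by simp [hcard]) p (Finset.mem_range.2 (by omega))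
    exact ⟨x, hx, h.symm⟩
  have hφs : ∀ y ∈ F2, ∃ x ∈ F1, φ x = y := fun y hy => hφ.surjOn hy
  have h2i : F2.image pos = Finset.range n := by
    apply Finset.eq_of_subset_of_card_le
    · intro p hp
      obtain ⟨y, hy, rfl⟩ := Finset.mem_image.1 hp
      obtain ⟨x, hx, rfl⟩ := hφs y hy
      have := hsh x hx
      have := hle x (hsub1 hx)
      rw [Finset.mem_range]; omega
    · rw [Finset.card_image_of_injOn (hinj.mono hsub2), hc2, Finset.card_range]
  have h1i : F1.image pos = Finset.Icc (2 * n + 1) (3 * n) := by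
    apply Finset.eq_of_subset_of_card_le
    · intro p hp
      obtain ⟨x, hx, rfl⟩ := Finset.mem_image.1 hp
      have := hsh x hx
      have := hle x (hsub1 hx)
      rw [Finset.mem_Icc]; omega
    · rw [Finset.card_image_of_injOn (hinj.mono hsub1), hc1, Nat.card_Icc]; omega
  have hmi : ∀ Q, Q ⊆ W → ∀ v ∈ W, (v ∈ Q ↔ pos v ∈ Q.image pos) := by
    intro Q hQ v hv
    rw [Finset.mem_image]
    constructor
    · intro h; exact ⟨v, h, rfl⟩
    · rintro ⟨z, hz, he⟩
      rwa [← hinj (hQ hz) hv he]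
  have h1 : ∀ v ∈ W, v ∈ F1 ↔ 2 * n + 1 ≤ pos v := by
    intro v hv
    have := hle v hv
    rw [hmi F1 hsub1 v hv, h1i, Finset.mem_Icc]; omega
  have h2 : ∀ v ∈ W, v ∈ F2 ↔ pos v < n := by
    intro v hv
    rw [hmi F2 hsub2 v hv, h2i, Finset.mem_range]
  have hfac := hfacet hsurj hR h1 h2
  have hmem : ∀ S, S ∈ (F.erase F1).erase F2 ↔ S ⊆ W ∧ ∃ a k : ℕ, a ≤ 2 * n ∧ 0 < k ∧ k < n ∧
      S.image pos = EE n a k := by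
    intro S
    rw [← hfac, Finset.mem_erase, Finset.mem_erase]
  have hqW : ∀ a ∈ W, q a ∈ W \ F2 := by
    intro a ha
    by_cases h : a ∈ F2
    · obtain ⟨x, hx, rfl⟩ := hφs a h
      rw [hq2 x hx, Finset.mem_sdiff]
      refine ⟨hsub1 hx, ?_⟩
      rw [h2 x (hsub1 hx)]
      have := (h1 x (hsub1 hx)).1 hx
      omega
    · rw [hq1 a h]; exact Finset.mem_sdiff.2 ⟨ha, h⟩
  have hψq : ∀ a ∈ W, ((pos (q a) : ℕ) : ZMod (2 * n + 1)) = (pos a : ℕ) := by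
    intro a ha
    by_cases h : a ∈ F2
    · obtain ⟨x, hx, rfl⟩ := hφs a h
      rw [hq2 x hx, hsh x hx, Nat.cast_add, ZMod.natCast_self, add_zero]
    · rw [hq1 a h]
  have hψq' : ∀ G, G ⊆ W → (G.image q).image (fun v => (pos v : ZMod (2 * n + 1))) =
      (G.image pos).image (fun p : ℕ => (p : ZMod (2 * n + 1))) := by
    intro G hG
    rw [Finset.image_image, Finset.image_image]
    apply Finset.image_congr
    intro a ha
    exact hψq a (hG ha)
  have hψinj : Set.InjOn (fun v => (pos v : ZMod (2 * n + 1))) (W \ F2 : Finset V) := by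
    intro u hu v hv h
    obtain ⟨hu1, hu2⟩ := Finset.mem_sdiff.1 (Finset.mem_coe.1 hu)
    obtain ⟨hv1, hv2⟩ := Finset.mem_sdiff.1 (Finset.mem_coe.1 hv)
    rw [h2 u hu1] at hu2
    rw [h2 v hv1] at hv2
    have := hle u hu1
    have := hle v hv1
    exact hinj hu1 hv1 (zcast_inj n _ _ h (by omega) (by omega))
  refine ⟨fun v => (pos v : ZMod (2 * n + 1)), ⟨fun _ _ => Set.mem_univ _, hψinj, ?_⟩, ?_⟩
  · intro z _
    have hz := ZMod.val_lt z
    by_cases hzn : n ≤ z.val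
    · obtain ⟨v, hv, hp⟩ := hsurj z.val (by omega)
      refine ⟨v, Finset.mem_coe.2 (Finset.mem_sdiff.2 ⟨hv, ?_⟩), ?_⟩
      · rw [h2 v hv]; omega
      · simp only [hp, ZMod.natCast_zmod_val]
    · obtain ⟨v, hv, hp⟩ := hsurj (z.val + (2 * n + 1)) (by omega)
      refine ⟨v, Finset.mem_coe.2 (Finset.mem_sdiff.2 ⟨hv, ?_⟩), ?_⟩
      · rw [h2 v hv]; omega
      · simp only [hp]
        rw [Nat.cast_add, ZMod.natCast_self, add_zero, ZMod.natCast_zmod_val]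
  · intro S hS
    rw [hM, kuhnel_iff, Finset.mem_image]
    constructor
    · rintro ⟨G, hG, rfl⟩
      obtain ⟨hGW, a, k, ha, hk0, hkn, he⟩ := (hmem G).1 hG
      refine ⟨a, k, ha, hk0, hkn, ?_⟩
      rw [hψq' G hGW, he]
    · rintro ⟨a, k, ha, hk0, hkn, he⟩
      have hGW : (W.filter fun v => pos v ∈ EE n a k) ⊆ W := Finset.filter_subset _ _
      have hGi : (W.filter fun v => pos v ∈ EE n a k).image pos = EE n a k := by
        ext p
        rw [Finset.mem_image]
        constructor
        · rintro ⟨v, hv, rfl⟩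
          exact (Finset.mem_filter.1 hv).2
        · intro hp
          obtain ⟨v, hv, rfl⟩ := hsurj p (by have := (mem_EE n a k p).1 hp; omega)
          exact ⟨v, Finset.mem_filter.2 ⟨hv, hp⟩, rfl⟩
      refine ⟨W.filter fun v => pos v ∈ EE n a k, (hmem _).2 ⟨hGW, a, k, ha, hk0, hkn, hGi⟩, ?_⟩
      have hGq : (W.filter fun v => pos v ∈ EE n a k).image q ⊆ W \ F2 := by
        intro x hx
        obtain ⟨y, hy, rfl⟩ := Finset.mem_image.1 hx
        exact hqW y (hGW hy)
      have hee := hψq' _ hGW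
      rw [hGi, ← he] at hee
      have hset : ∀ A B : Finset V, A ⊆ W \ F2 → B ⊆ W \ F2 →
          A.image (fun v => (pos v : ZMod (2 * n + 1))) =
          B.image (fun v => (pos v : ZMod (2 * n + 1))) → A ⊆ B := by
        intro A B hA hB h x hx
        have := Finset.mem_image_of_mem (fun v => (pos v : ZMod (2 * n + 1))) hx
        rw [h] at this
        obtain ⟨y, hy, hxy⟩ := Finset.mem_image.1 this
        rwa [← hψinj (hB hy) (hA hx) hxy]
      exact Finset.Subset.antisymm (hset _ _ hGq hS hee) (hset _ _ hS hGq hee.symm)
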